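/- For every ε > 0 there exists a constant C = C(ε) such that the following holds. Let p be a prime, let a, b be integers with p ∤ ab, let K, M, N ≥ 1 be real numbers, and let U ≥ 1 be a real number. Then the number of 8-tuples of positive integers (k, k̃, m, m̃, n, ñ, u, ũ) with k, k̃ ≤ K, m, m̃ ≤ M, n, ñ ≤ N, U < u, ũ ≤ 2U, satisfying the congruence (a·k + b·m·n)·ñ·ũ ≡ (a·k̃ + b·m̃·ñ)·n·u (mod p) with (a·k + b·m·n)·ñ·ũ ≢ 0 (mod p), is at most C · p^ε · K·M·U·(K + N)·(1 + (|a|·K + |b|·M·N)·U·N/p). -/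

import Mathlib

open Finset

/-!
Write `ñ`, `ũ`, `k̃`, `m̃` for `n'`, `u'`, `k'`, `m'`, and freeze `k`, `m`, `ñ`, `ũ`. The
congruence becomes `(a k̃ + b ñ m̃) n u ≡ r + s n` with `r = a k ñ ũ` and `s = b m ñ ũ`. After
replacing `a` and `b` by residues of absolute value at most `p`, both sides have size at most
`X = (|a| K + |b| M N) N W`, where `W = 2 U`, so they differ by `p t` for one of `O(1 + X / p)`
integers `t`. For each such `t`, the equation `(a k̃ + b ñ m̃) n u = (r + p t) + s n` shows that `n`
divides `r + p t ≠ 0`, and then that `u` divides the nonzero right-hand side: there are `O(p ^ ε)`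
pairs `(n, u)`. Each of them determines `a k̃ + b ñ m̃`, hence `k̃` modulo `ñ / gcd(ñ, a)`, and
`k̃` then determines `m̃`. Summing `K gcd(ñ, a) / ñ + 1` over `ñ ≤ N` produces the factor `K + N`,
up to `O(p ^ ε)`.

This needs `K`, `M`, `N`, `W` to be smaller than `p`. If one of them is not, solving the congruence
for the corresponding variable modulo `p` is already enough.
-/

section DivisorBound

lemma natCast_add_one_le_mul_pow {c x : ℝ} (hc : 1 < c) (hcx : c ≤ x) (e : ℕ) :
    (e + 1 : ℝ) ≤ max 1 (1 / (c - 1)) * x ^ e := by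
  have hc' : 0 < c - 1 := sub_pos.mpr hc
  have bernoulli : 1 + e * (c - 1) ≤ x ^ e :=
    (one_add_mul_sub_le_pow (by linarith) e).trans (by gcongr)
  calc (e + 1 : ℝ) = 1 + 1 / (c - 1) * (e * (c - 1)) := by field_simp; ring
    _ ≤ max 1 (1 / (c - 1)) * 1 + max 1 (1 / (c - 1)) * (e * (c - 1)) := by
        gcongr
        · simp
        · exact le_max_right _ _
    _ = max 1 (1 / (c - 1)) * (1 + e * (c - 1)) := by ring
    _ ≤ max 1 (1 / (c - 1)) * x ^ e := by gcongr

lemma natCast_add_one_le_pow {x : ℝ} (hx : 2 ≤ x) (e : ℕ) : (e + 1 : ℝ) ≤ x ^ e := by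
  have bernoulli := one_add_mul_sub_le_pow (by linarith : -1 ≤ x) e
  have : (e : ℝ) * 1 ≤ e * (x - 1) := by gcongr; linarith
  linarith

lemma natCast_rpow_eq_prod_primeFactors {n : ℕ} (hn : n ≠ 0) (δ : ℝ) :
    (n : ℝ) ^ δ = ∏ q ∈ n.primeFactors, ((q : ℝ) ^ δ) ^ n.factorization q := by
  conv_lhs => rw [← Nat.prod_factorization_pow_eq_self hn]
  rw [Finsupp.prod, Nat.support_factorization, Nat.cast_prod,
    ← Real.finsetProd_rpow _ _ fun _ _ ↦ by positivity]
  refine prod_congr rfl fun q _ ↦ ?_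
  rw [Nat.cast_pow, Real.rpow_pow_comm (Nat.cast_nonneg q)]

/- Writing `τ(n) / n ^ δ` as a product of `(e + 1) / q ^ (δ e)` over the prime powers `q ^ e`
exactly dividing `n`, only the finitely many primes `q < 2 ^ (1 / δ)` can give a factor
exceeding `1`, and each of those is bounded in terms of `δ`. -/
theorem exists_card_divisors_le_mul_rpow {δ : ℝ} (hδ : 0 < δ) :
    ∃ C : ℝ, 1 ≤ C ∧ ∀ n : ℕ, n ≠ 0 → (#n.divisors : ℝ) ≤ C * (n : ℝ) ^ δ := by
  obtain ⟨P, hP⟩ := exists_nat_ge ((2 : ℝ) ^ δ⁻¹)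
  set B : ℝ := max 1 (1 / ((2 : ℝ) ^ δ - 1))
  have hB : 1 ≤ B := le_max_left _ _
  have factor_le {q : ℕ} (hq : q.Prime) (e : ℕ) :
      (e + 1 : ℝ) ≤ (if q < P then B else 1) * ((q : ℝ) ^ δ) ^ e := by
    split_ifs with hqP
    · have h2q : (2 : ℝ) ^ δ ≤ (q : ℝ) ^ δ := by
        gcongr
        exact_mod_cast hq.two_le
      exact natCast_add_one_le_mul_pow (Real.one_lt_rpow one_lt_two hδ) h2q e
    · have h2q : 2 ≤ (q : ℝ) ^ δ := by
        rw [← Real.rpow_inv_le_iff_of_pos zero_le_two (Nat.cast_nonneg q) hδ]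
        exact hP.trans (by exact_mod_cast not_lt.mp hqP)
      simpa using natCast_add_one_le_pow h2q e
  have prod_le (n : ℕ) : ∏ q ∈ n.primeFactors, (if q < P then B else 1) ≤ B ^ P := by
    rw [prod_ite, prod_const, prod_const_one, mul_one]
    refine pow_le_pow_right₀ hB ?_
    calc #{q ∈ n.primeFactors | q < P} ≤ #(range P) :=
          card_le_card fun q hq ↦ mem_range.mpr (mem_filter.mp hq).2
      _ = P := card_range P
  refine ⟨B ^ P, one_le_pow₀ hB, fun n hn ↦ ?_⟩
  calc (#n.divisors : ℝ) = ∏ q ∈ n.primeFactors, (n.factorization q + 1 : ℝ) := by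
        rw [Nat.card_divisors hn]
        push_cast
        rfl
    _ ≤ ∏ q ∈ n.primeFactors,
          (if q < P then B else 1) * ((q : ℝ) ^ δ) ^ n.factorization q :=
        prod_le_prod (fun _ _ ↦ by positivity)
          fun q hq ↦ factor_le (Nat.prime_of_mem_primeFactors hq) _
    _ ≤ B ^ P * (n : ℝ) ^ δ := by
        rw [prod_mul_distrib, natCast_rpow_eq_prod_primeFactors hn]
        gcongr
        exact prod_le n

end DivisorBound

section GcdSum

lemma sum_inv_Icc_le_one_add_log (N : ℕ) :
    ∑ j ∈ Icc 1 N, (j : ℝ)⁻¹ ≤ 1 + Real.log N := by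
  simpa [harmonic_eq_sum_Icc] using harmonic_le_one_add_log N

lemma sum_inv_div_gcd_le {a : ℕ} (ha : a ≠ 0) (N : ℕ) :
    ∑ n ∈ Icc 1 N, ((n / n.gcd a : ℕ) : ℝ)⁻¹ ≤ #a.divisors * (1 + Real.log N) := by
  let φ : ℕ → ℕ × ℕ := fun n ↦ (n.gcd a, n / n.gcd a)
  have hφ : Function.Injective φ := fun x y hxy ↦ by
    obtain ⟨hgcd, hdiv⟩ := Prod.mk.inj hxy
    rw [← Nat.div_mul_cancel (Nat.gcd_dvd_left x a), hdiv, hgcd,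
      Nat.div_mul_cancel (Nat.gcd_dvd_left y a)]
  have image_subset : (Icc 1 N).image φ ⊆ a.divisors ×ˢ Icc 1 N := by
    simp only [image_subset_iff, mem_Icc, mem_product, Nat.mem_divisors, φ]
    exact fun n hn ↦ ⟨⟨Nat.gcd_dvd_right n a, ha⟩,
      Nat.div_pos (Nat.gcd_le_left a hn.1) (Nat.gcd_pos_of_pos_left a hn.1),
      (Nat.div_le_self _ _).trans hn.2⟩
  calc ∑ n ∈ Icc 1 N, ((n / n.gcd a : ℕ) : ℝ)⁻¹
      = ∑ z ∈ (Icc 1 N).image φ, (z.2 : ℝ)⁻¹ := by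
        rw [sum_image hφ.injOn]
    _ ≤ ∑ z ∈ a.divisors ×ˢ Icc 1 N, (z.2 : ℝ)⁻¹ :=
        sum_le_sum_of_subset_of_nonneg image_subset fun _ _ _ ↦ by positivity
    _ = #a.divisors * ∑ j ∈ Icc 1 N, (j : ℝ)⁻¹ := by
        simp only [sum_product, sum_const, nsmul_eq_mul]
    _ ≤ #a.divisors * (1 + Real.log N) := by
        gcongr
        exact sum_inv_Icc_le_one_add_log N

end GcdSum

section Counting

lemma card_le_card_mul_of_modEq {α β : Type*} {s : Finset α} {t : Finset β} {f : α → β}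
    {g : α → ℕ} {A B d : ℕ} (hf : ∀ x ∈ s, f x ∈ t) (hg : ∀ x ∈ s, g x ∈ Icc A B)
    (hinj : Set.InjOn (fun x ↦ (f x, g x)) s)
    (hmod : ∀ x ∈ s, ∀ y ∈ s, f x = f y → g x ≡ g y [MOD d]) :
    #s ≤ #t * ((B - A) / d + 1) := by
  let φ : α → β × ℕ := fun x ↦ (f x, (g x - A) / d)
  have maps_to : Set.MapsTo φ s (t ×ˢ range ((B - A) / d + 1) : Finset (β × ℕ)) := fun x hx ↦ by
    have hgx := (mem_Icc.mp (hg x hx)).2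
    simp only [coe_product, Set.mem_prod, mem_coe, mem_range, φ]
    exact ⟨hf x hx, Nat.lt_succ_of_le (Nat.div_le_div_right (Nat.sub_le_sub_right hgx A))⟩
  have inj_on : Set.InjOn φ s := fun x hx y hy hxy ↦ by
    obtain ⟨hfxy, hquot⟩ := Prod.mk.inj hxy
    have hAx := (mem_Icc.mp (hg x hx)).1
    have hAy := (mem_Icc.mp (hg y hy)).1
    have hrem : (g x - A) % d = (g y - A) % d :=
      Nat.ModEq.add_right_cancel' A <| by
        simpa only [Nat.sub_add_cancel hAx, Nat.sub_add_cancel hAy] using hmod x hx y hy hfxy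
    have hsub : g x - A = g y - A := by
      rw [← Nat.div_add_mod (g x - A) d, hquot, hrem, Nat.div_add_mod]
    exact hinj hx hy (Prod.ext hfxy (show g x = g y by omega))
  simpa using card_le_card_of_injOn φ maps_to inj_on

lemma modEq_div_gcd_of_add_mul_eq {a e : ℤ} {h : ℕ} (hh : 0 < h) (hhe : (h : ℤ) ∣ e)
    {x x' y y' : ℕ} (heq : a * x + e * y = a * x' + e * y') :
    x ≡ x' [MOD h / h.gcd a.natAbs] := by
  refine Nat.ModEq.cancel_left_div_gcd hh (Nat.modEq_iff_dvd.mpr ?_)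
  have hdvd : (h : ℤ) ∣ a * (x' - x) := by
    rw [show a * ((x' : ℤ) - x) = e * (y - y') by linear_combination -heq]
    exact hhe.mul_right _
  rw [← Int.dvd_natAbs, Int.natAbs_mul] at hdvd
  rw [← Int.dvd_natAbs]
  push_cast [← mul_sub, Int.natAbs_mul]
  simpa using hdvd

lemma card_le_mul_of_dvd_of_dvd_add_mul {r s : ℤ} (hr : r ≠ 0) {D N : ℕ}
    (hDr : #r.natAbs.divisors ≤ D)
    (hD : ∀ n ≤ N, r + s * n ≠ 0 → #(r + s * n).natAbs.divisors ≤ D) {G : Finset (ℕ × ℕ)}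
    (hG : ∀ n u, (n, u) ∈ G → n ≤ N ∧ (n : ℤ) ∣ r ∧ (u : ℤ) ∣ r + s * n ∧ r + s * n ≠ 0) :
    #G ≤ D * D := by
  have card_fibre_le : ∀ n ∈ r.natAbs.divisors, #{q ∈ G | q.1 = n} ≤ D := fun n _ ↦ by
    obtain hempty | ⟨q₀, hq₀⟩ := {q ∈ G | q.1 = n}.eq_empty_or_nonempty
    · simp [hempty]
    obtain ⟨hG₀, hn⟩ := mem_filter.mp hq₀
    obtain ⟨hnN, -, -, hne⟩ := hn ▸ hG _ _ hG₀
    refine (card_le_card_of_injOn Prod.snd ?_ ?_).trans (hD n hnN hne)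
    · rintro ⟨n', u⟩ hq
      obtain ⟨hqG, rfl⟩ := mem_filter.mp hq
      exact Nat.mem_divisors.mpr
        ⟨Int.natCast_dvd.mp (hG _ u hqG).2.2.1, Int.natAbs_ne_zero.mpr hne⟩
    · rintro ⟨n₁, u₁⟩ hq₁ ⟨n₂, u₂⟩ hq₂ hu
      exact Prod.ext ((mem_filter.mp hq₁).2.trans (mem_filter.mp hq₂).2.symm) hu
  have maps_to : ∀ q ∈ G, q.1 ∈ r.natAbs.divisors := fun q hq ↦
    Nat.mem_divisors.mpr ⟨Int.natCast_dvd.mp (hG q.1 q.2 hq).2.1, Int.natAbs_ne_zero.mpr hr⟩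
  calc #G ≤ D * #r.natAbs.divisors := card_le_mul_card_image_of_maps_to maps_to D card_fibre_le
    _ ≤ D * D := Nat.mul_le_mul_left D hDr

lemma card_le_of_add_mul_mul_eq {a e r s : ℤ} (he : e ≠ 0) {h : ℕ} (hhe : (h : ℤ) ∣ e)
    (hr : r ≠ 0) {D K N : ℕ} (hDr : #r.natAbs.divisors ≤ D)
    (hD : ∀ n ≤ N, r + s * n ≠ 0 → #(r + s * n).natAbs.divisors ≤ D)
    {F : Finset (ℕ × ℕ × ℕ × ℕ)}
    (hF : ∀ x y n u, (x, y, n, u) ∈ F →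
      x ≤ K ∧ n ≤ N ∧ (a * x + e * y) * n * u = r + s * n ∧ r + s * n ≠ 0) :
    #F ≤ D * D * (K / (h / h.gcd a.natAbs) + 1) := by
  have hh : 0 < h := Nat.pos_of_ne_zero fun h0 ↦ he (by simpa [h0] using hhe)
  have card_pairs : #(F.image fun q ↦ q.2.2) ≤ D * D := by
    refine card_le_mul_of_dvd_of_dvd_add_mul hr hDr hD fun n u hnu ↦ ?_
    obtain ⟨⟨x, y, n, u⟩, hq, rfl, rfl⟩ := mem_image.mp hnu
    obtain ⟨-, hnN, heq, hne⟩ := hF x y n u hq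
    exact ⟨hnN, ⟨(a * x + e * y) * u - s, by linear_combination -heq⟩,
      ⟨(a * x + e * y) * n, by linear_combination -heq⟩, hne⟩
  have linear_form_eq {x y x' y' n u : ℕ} (hq : (x, y, n, u) ∈ F) (hq' : (x', y', n, u) ∈ F) :
      a * x + e * y = a * x' + e * y' := by
    obtain ⟨-, -, heq, hne⟩ := hF x y n u hq
    obtain ⟨-, -, heq', -⟩ := hF x' y' n u hq'
    have hnu : (n * u : ℤ) ≠ 0 := fun h0 ↦ hne (by rw [← heq, mul_assoc, h0, mul_zero])
    exact mul_right_cancel₀ hnu (by linear_combination heq - heq')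
  refine (card_le_card_mul_of_modEq (g := Prod.fst) (A := 0) (B := K)
    (fun _ ↦ mem_image_of_mem _) ?_ ?_ ?_).trans (Nat.mul_le_mul_right _ card_pairs)
  · rintro ⟨x, y, n, u⟩ hq
    exact mem_Icc.mpr ⟨Nat.zero_le x, (hF x y n u hq).1⟩
  · rintro ⟨x, y, n, u⟩ hq ⟨x', y', n', u'⟩ hq' hqq'
    obtain ⟨⟨rfl, rfl⟩, rfl⟩ : (n = n' ∧ u = u') ∧ x = x' := by simpa using hqq'
    have hy : (y : ℤ) = y' := mul_left_cancel₀ he (add_left_cancel (linear_form_eq hq hq'))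
    rw [Nat.cast_inj.mp hy]
  · rintro ⟨x, y, n, u⟩ hq ⟨x', y', n', u'⟩ hq' hqq'
    obtain ⟨rfl, rfl⟩ : n = n' ∧ u = u' := by simpa using hqq'
    exact modEq_div_gcd_of_add_mul_eq hh hhe (linear_form_eq hq hq')

lemma mem_Icc_neg_div_iff {p : ℕ} (hp : 0 < p) {X : ℕ} {t : ℤ} :
    t ∈ Icc (-((X / p : ℕ) : ℤ)) (X / p : ℕ) ↔ |(p : ℤ) * t| ≤ X := by
  rw [mem_Icc, ← abs_le, abs_mul, Nat.abs_cast, Int.natCast_div,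
    Int.le_ediv_iff_mul_le (by exact_mod_cast hp), mul_comm]

lemma abs_add_mul_mul_le (a e : ℤ) {x y n u K M N W : ℕ} (hx : x ≤ K) (hy : y ≤ M) (hn : n ≤ N)
    (hu : u ≤ W) : |(a * x + e * y) * n * u| ≤ (|a| * K + |e| * M) * N * W := by
  rw [abs_mul, abs_mul, Nat.abs_cast, Nat.abs_cast]
  gcongr
  refine (abs_add_le _ _).trans ?_
  rw [abs_mul, abs_mul, Nat.abs_cast, Nat.abs_cast]
  gcongr

end Counting

section CongruenceSolutions

variable {p : ℕ}

/-- The solutions `(x, y, n, u)`, with `1 ≤ x ≤ K`, `1 ≤ y ≤ M`, `1 ≤ n ≤ N`, `V < u ≤ W`, of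
`(a x + b y) n u = r + s n ≠ 0` in `ZMod p`. For `(x, y, n, u) = (k̃, m̃, n, u)` this is the
congruence of the theorem with `k`, `m`, `ñ`, `ũ` frozen: `b` there stands for `b ñ`, and the two
terms of the left-hand side `(a k + b m n) ñ ũ` are `r` and `s n`. -/
def congruenceSolutions (a b r s : ZMod p) (K M N V W : ℕ) : Finset (ℕ × ℕ × ℕ × ℕ) :=
  {q ∈ Icc 1 K ×ˢ Icc 1 M ×ˢ Icc 1 N ×ˢ Ioc V W |
    (a * q.1 + b * q.2.1) * q.2.2.1 * q.2.2.2 = r + s * q.2.2.1 ∧ r + s * q.2.2.1 ≠ 0}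

variable {a b r s : ZMod p} {K M N V W : ℕ}

lemma mem_congruenceSolutions {x y n u : ℕ} :
    (x, y, n, u) ∈ congruenceSolutions a b r s K M N V W ↔
      (x ∈ Icc 1 K ∧ y ∈ Icc 1 M ∧ n ∈ Icc 1 N ∧ u ∈ Ioc V W) ∧
        (a * x + b * y) * n * u = r + s * n ∧ r + s * n ≠ 0 := by
  simp only [congruenceSolutions, mem_filter, mem_product]

section FreeOneVariable

variable [Fact p.Prime]

lemma ne_zero_of_mem_congruenceSolutions {x y n u : ℕ}
    (hq : (x, y, n, u) ∈ congruenceSolutions a b r s K M N V W) :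
    a * x + b * y ≠ 0 ∧ (n : ZMod p) ≠ 0 ∧ (u : ZMod p) ≠ 0 := by
  obtain ⟨-, heq, hne⟩ := mem_congruenceSolutions.mp hq
  rw [← heq] at hne
  simpa only [mul_ne_zero_iff, and_assoc] using hne

lemma card_congruenceSolutions_le_of_free_fst (ha : a ≠ 0) :
    #(congruenceSolutions a b r s K M N V W) ≤ M * N * (W - V) * (K / p + 1) := by
  refine (card_le_card_mul_of_modEq (t := Icc 1 M ×ˢ Icc 1 N ×ˢ Ioc V W)
    (f := fun (_, y, n, u) ↦ (y, n, u)) (g := fun (x, _, _, _) ↦ x) (A := 0) (B := K) (d := p)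
    ?_ ?_ ?_ ?_).trans_eq (by simp [mul_assoc])
  · rintro ⟨x, y, n, u⟩ hq
    simp_all [mem_congruenceSolutions]
  · rintro ⟨x, y, n, u⟩ hq
    simp_all [mem_congruenceSolutions]
  · rintro ⟨x, y, n, u⟩ - ⟨x', y', n', u'⟩ - hqq'
    simp_all
  · rintro ⟨x, y, n, u⟩ hq ⟨x', y', n', u'⟩ hq' hqq'
    obtain ⟨rfl, rfl, rfl⟩ : y = y' ∧ n = n' ∧ u = u' := by simpa using hqq'
    obtain ⟨-, hn, hu⟩ := ne_zero_of_mem_congruenceSolutions hq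
    have heq := (mem_congruenceSolutions.mp hq).2.1
    have heq' := (mem_congruenceSolutions.mp hq').2.1
    rw [← ZMod.natCast_eq_natCast_iff]
    exact mul_left_cancel₀ (mul_ne_zero (mul_ne_zero ha hn) hu) (by linear_combination heq - heq')

lemma card_congruenceSolutions_le_of_free_snd (hb : b ≠ 0) :
    #(congruenceSolutions a b r s K M N V W) ≤ K * N * (W - V) * (M / p + 1) := by
  refine (card_le_card_mul_of_modEq (t := Icc 1 K ×ˢ Icc 1 N ×ˢ Ioc V W)
    (f := fun (x, _, n, u) ↦ (x, n, u)) (g := fun (_, y, _, _) ↦ y) (A := 0) (B := M) (d := p)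
    ?_ ?_ ?_ ?_).trans_eq (by simp [mul_assoc])
  · rintro ⟨x, y, n, u⟩ hq
    simp_all [mem_congruenceSolutions]
  · rintro ⟨x, y, n, u⟩ hq
    simp_all [mem_congruenceSolutions]
  · rintro ⟨x, y, n, u⟩ - ⟨x', y', n', u'⟩ - hqq'
    simp_all
  · rintro ⟨x, y, n, u⟩ hq ⟨x', y', n', u'⟩ hq' hqq'
    obtain ⟨rfl, rfl, rfl⟩ : x = x' ∧ n = n' ∧ u = u' := by simpa using hqq'
    obtain ⟨-, hn, hu⟩ := ne_zero_of_mem_congruenceSolutions hq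
    have heq := (mem_congruenceSolutions.mp hq).2.1
    have heq' := (mem_congruenceSolutions.mp hq').2.1
    rw [← ZMod.natCast_eq_natCast_iff]
    exact mul_left_cancel₀ (mul_ne_zero (mul_ne_zero hb hn) hu) (by linear_combination heq - heq')

lemma card_congruenceSolutions_le_of_free_third (hr : r ≠ 0) :
    #(congruenceSolutions a b r s K M N V W) ≤ K * M * (W - V) * (N / p + 1) := by
  refine (card_le_card_mul_of_modEq (t := Icc 1 K ×ˢ Icc 1 M ×ˢ Ioc V W)
    (f := fun (x, y, _, u) ↦ (x, y, u)) (g := fun (_, _, n, _) ↦ n) (A := 0) (B := N) (d := p)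
    ?_ ?_ ?_ ?_).trans_eq (by simp [mul_assoc])
  · rintro ⟨x, y, n, u⟩ hq
    simp_all [mem_congruenceSolutions]
  · rintro ⟨x, y, n, u⟩ hq
    simp_all [mem_congruenceSolutions]
  · rintro ⟨x, y, n, u⟩ - ⟨x', y', n', u'⟩ - hqq'
    simp_all
  · rintro ⟨x, y, n, u⟩ hq ⟨x', y', n', u'⟩ hq' hqq'
    obtain ⟨rfl, rfl, rfl⟩ : x = x' ∧ y = y' ∧ u = u' := by simpa using hqq'
    have heq := (mem_congruenceSolutions.mp hq).2.1
    have heq' := (mem_congruenceSolutions.mp hq').2.1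
    have hcoeff : (a * x + b * y) * u - s ≠ 0 := fun h0 ↦
      hr (by linear_combination (n : ZMod p) * h0 - heq)
    rw [← ZMod.natCast_eq_natCast_iff]
    exact mul_left_cancel₀ hcoeff (by linear_combination heq - heq')

lemma card_congruenceSolutions_le_of_free_fourth :
    #(congruenceSolutions a b r s K M N V W) ≤ K * M * N * ((W - V) / p + 1) := by
  refine (card_le_card_mul_of_modEq (t := Icc 1 K ×ˢ Icc 1 M ×ˢ Icc 1 N)
    (f := fun (x, y, n, _) ↦ (x, y, n)) (g := fun (_, _, _, u) ↦ u) (A := V) (B := W) (d := p)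
    ?_ ?_ ?_ ?_).trans_eq (by simp [mul_assoc])
  · rintro ⟨x, y, n, u⟩ hq
    simp_all [mem_congruenceSolutions]
  · rintro ⟨x, y, n, u⟩ hq
    simp_all [mem_congruenceSolutions, Nat.le_of_lt]
  · rintro ⟨x, y, n, u⟩ - ⟨x', y', n', u'⟩ - hqq'
    simp_all
  · rintro ⟨x, y, n, u⟩ hq ⟨x', y', n', u'⟩ hq' hqq'
    obtain ⟨rfl, rfl, rfl⟩ : x = x' ∧ y = y' ∧ n = n' := by simpa using hqq'
    obtain ⟨hxy, hn, -⟩ := ne_zero_of_mem_congruenceSolutions hq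
    have heq := (mem_congruenceSolutions.mp hq).2.1
    have heq' := (mem_congruenceSolutions.mp hq').2.1
    rw [← ZMod.natCast_eq_natCast_iff]
    exact mul_left_cancel₀ (mul_ne_zero hxy hn) (by linear_combination heq - heq')

end FreeOneVariable

lemma card_congruenceSolutions_intCast_le [NeZero p] {a e r s : ℤ} (he : e ≠ 0) {h : ℕ}
    (hhe : (h : ℤ) ∣ e) (hr : (r : ZMod p) ≠ 0) {X D : ℕ}
    (hX : (|a| * K + |e| * M) * N * W ≤ X) (hrs : ∀ n ≤ N, |r + s * n| ≤ X)
    (hD : ∀ z ≠ 0, z ≤ 3 * X → #z.divisors ≤ D) :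
    #(congruenceSolutions (a : ZMod p) e r s K M N V W) ≤
      D * D * (K / (h / h.gcd a.natAbs) + 1) * (2 * (2 * X / p) + 1) := by
  have hp : 0 < p := Nat.pos_of_neZero p
  let T : Finset ℤ := Icc (-((2 * X / p : ℕ) : ℤ)) (2 * X / p : ℕ)
  let quotient : ℕ × ℕ × ℕ × ℕ → ℤ := fun (x, y, n, u) ↦
    ((a * x + e * y) * n * u - (r + s * n)) / p
  have p_mul_quotient {x y n u : ℕ}
      (hq : (x, y, n, u) ∈ congruenceSolutions (a : ZMod p) e r s K M N V W) :
      p * quotient (x, y, n, u) = (a * x + e * y) * n * u - (r + s * n) := by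
    refine Int.mul_ediv_cancel' ((ZMod.intCast_zmod_eq_zero_iff_dvd _ p).mp ?_)
    push_cast
    exact sub_eq_zero.mpr (mem_congruenceSolutions.mp hq).2.1
  have card_T : #T = 2 * (2 * X / p) + 1 := by
    rw [Int.card_Icc]
    omega
  have divisors_le {z t : ℤ} {n : ℕ} (ht : t ∈ T) (hn : n ≤ N) (hz : z = r + s * n + p * t)
      (hz0 : z ≠ 0) : #z.natAbs.divisors ≤ D := by
    refine hD _ (Int.natAbs_ne_zero.mpr hz0) ?_
    have habs := (abs_add_le _ _).trans (add_le_add (hrs n hn) ((mem_Icc_neg_div_iff hp).mp ht))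
    rw [← hz, Int.abs_eq_natAbs] at habs
    omega
  rw [← card_T]
  refine card_le_mul_card_image_of_maps_to (f := quotient) ?_ _ fun t ht ↦ ?_
  · rintro ⟨x, y, n, u⟩ hq
    obtain ⟨⟨hx, hy, hn, hu⟩, -⟩ := mem_congruenceSolutions.mp hq
    simp only [mem_Icc, mem_Ioc] at hx hy hn hu
    have abs_lhs_le := (abs_add_mul_mul_le a e hx.2 hy.2 hn.2 hu.2).trans hX
    rw [mem_Icc_neg_div_iff hp, p_mul_quotient hq, Nat.cast_mul, Nat.cast_two, two_mul]
    exact (abs_sub _ _).trans (add_le_add abs_lhs_le (hrs n hn.2))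
  · have hr' : r + p * t ≠ 0 := fun h0 ↦ hr <| by
      simpa using congrArg (Int.cast (R := ZMod p)) h0
    refine card_le_of_add_mul_mul_eq (r := r + p * t) (s := s) (N := N) he hhe hr'
      (divisors_le (n := 0) ht N.zero_le (by simp) hr')
      (fun n hn ↦ divisors_le ht hn (by ring)) fun x y n u hq ↦ ?_
    obtain ⟨hqS, rfl⟩ := mem_filter.mp hq
    obtain ⟨⟨hx, -, hn, -⟩, -, hne⟩ := mem_congruenceSolutions.mp hqS
    refine ⟨(mem_Icc.mp hx).2, (mem_Icc.mp hn).2, ?_, fun h0 ↦ hne ?_⟩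
    · linear_combination -p_mul_quotient hqS
    · simpa [add_right_comm] using congrArg (Int.cast (R := ZMod p)) h0

end CongruenceSolutions

section SolutionCount

variable {p : ℕ}

/-- The number of solutions of the congruence of the theorem in the box with sides `K`, `M`, `N`
and `V < u, ũ ≤ W`, organised as a sum over the frozen variables `k`, `m`, `ñ`, `ũ`. -/
def solutionCount (a b : ZMod p) (K M N V W : ℕ) : ℕ :=
  ∑ k ∈ Icc 1 K, ∑ m ∈ Icc 1 M, ∑ n' ∈ Icc 1 N, ∑ u' ∈ Ioc V W,
    #(congruenceSolutions a (b * n') (a * k * n' * u') (b * m * n' * u') K M N V W)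

open Classical in
lemma sum_ite_modEq_eq_solutionCount (p : ℕ) (a b : ℤ) (K M N V W : ℕ) :
    (∑ k ∈ Icc 1 K, ∑ k' ∈ Icc 1 K, ∑ m ∈ Icc 1 M, ∑ m' ∈ Icc 1 M,
      ∑ n ∈ Icc 1 N, ∑ n' ∈ Icc 1 N, ∑ u ∈ Ioc V W, ∑ u' ∈ Ioc V W,
        if ((a * k + b * m * n) * n' * u' ≡ (a * k' + b * m' * n') * n * u [ZMOD (p : ℤ)]) ∧
            ¬ ((a * k + b * m * n) * n' * u' ≡ 0 [ZMOD (p : ℤ)]) then (1 : ℝ)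
        else 0) = solutionCount (a : ZMod p) b K M N V W := by
  simp only [solutionCount, congruenceSolutions, card_filter, Nat.cast_sum, Nat.cast_ite,
    Nat.cast_one, Nat.cast_zero, ← sum_product']
  refine sum_nbij' (fun (k, k', m, m', n, n', u, u') ↦ (k, m, n', u', k', m', n, u))
    (fun (k, m, n', u', k', m', n, u) ↦ (k, k', m, m', n, n', u, u'))
    (by simp only [mem_product]; tauto) (by simp only [mem_product]; tauto)
    (fun _ _ ↦ rfl) (fun _ _ ↦ rfl) fun (k, k', m, m', n, n', u, u') _ ↦ ?_
  simp only [← ZMod.intCast_eq_intCast_iff, ne_eq]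
  push_cast
  rw [show ((a : ZMod p) * k + b * m * n) * n' * u' = a * k * n' * u' + b * m * n' * u' * n by ring,
    show ((a : ZMod p) * k' + b * m' * n') * n * u = (a * k' + b * n' * m') * n * u by ring]
  exact if_congr (and_congr_left' eq_comm) rfl rfl

lemma solutionCount_le_of_forall {a b : ZMod p} {K M N V W : ℕ} {B : ℕ → ℝ}
    (hB : ∀ n', 0 ≤ B n')
    (hle : ∀ k ∈ Icc 1 K, ∀ m ∈ Icc 1 M, ∀ n' ∈ Icc 1 N, ∀ u' ∈ Ioc V W,
      (n' : ZMod p) ≠ 0 → (u' : ZMod p) ≠ 0 →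
      (#(congruenceSolutions a (b * n') (a * k * n' * u') (b * m * n' * u') K M N V W) : ℝ) ≤
        B n') :
    (solutionCount a b K M N V W : ℝ) ≤ K * M * (W - V : ℕ) * ∑ n' ∈ Icc 1 N, B n' := by
  calc (solutionCount a b K M N V W : ℝ)
      ≤ ∑ k ∈ Icc 1 K, ∑ m ∈ Icc 1 M, ∑ n' ∈ Icc 1 N, ∑ _u' ∈ Ioc V W, B n' := by
        push_cast [solutionCount]
        gcongr with k hk m hm n' hn' u' hu'
        by_cases h0 : (n' : ZMod p) = 0 ∨ (u' : ZMod p) = 0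
        · refine le_of_eq_of_le ?_ (hB n')
          obtain h0 | h0 := h0 <;> simp [congruenceSolutions, h0]
        · obtain ⟨hn0, hu0⟩ := not_or.mp h0
          exact hle k hk m hm n' hn' u' hu' hn0 hu0
    _ = K * M * (W - V : ℕ) * ∑ n' ∈ Icc 1 N, B n' := by
        simp only [sum_const, Nat.card_Icc, Nat.card_Ioc, Nat.add_sub_cancel, nsmul_eq_mul,
          ← mul_sum]
        ring

end SolutionCount

section Bounds

/-- The right-hand side `K M U (K + N) (1 + (|a| K + |b| M N) U N / p)` of the theorem, without the
factor `C p ^ ε`. -/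
noncomputable def mainTerm (p : ℕ) (a b : ℤ) (K M N U : ℝ) : ℝ :=
  K * M * U * (K + N) * (1 + (|(a : ℝ)| * K + |(b : ℝ)| * M * N) * U * N / p)

lemma mainTerm_le_mainTerm (p : ℕ) {a a' b b' : ℤ} (ha : a.natAbs ≤ a'.natAbs)
    (hb : b.natAbs ≤ b'.natAbs) {K K' M M' N N' U U' : ℝ} (hK : 0 ≤ K) (hM : 0 ≤ M) (hN : 0 ≤ N)
    (hU : 0 ≤ U) (hKK' : K ≤ K') (hMM' : M ≤ M') (hNN' : N ≤ N') (hUU' : U ≤ U') :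
    mainTerm p a b K M N U ≤ mainTerm p a' b' K' M' N' U' := by
  have haa' : |(a : ℝ)| ≤ |(a' : ℝ)| := by
    rw [← Int.cast_abs, ← Int.cast_abs, Int.abs_eq_natAbs, Int.abs_eq_natAbs]
    exact_mod_cast ha
  have hbb' : |(b : ℝ)| ≤ |(b' : ℝ)| := by
    rw [← Int.cast_abs, ← Int.cast_abs, Int.abs_eq_natAbs, Int.abs_eq_natAbs]
    exact_mod_cast hb
  unfold mainTerm
  have := hK.trans hKK'
  have := hM.trans hMM'
  have := hN.trans hNN'
  have := hU.trans hUU'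
  gcongr

lemma mainTerm_two_mul_le (p : ℕ) (a b : ℤ) {K M N U : ℝ} (hK : 0 ≤ K) (hM : 0 ≤ M)
    (hN : 0 ≤ N) (hU : 0 ≤ U) : mainTerm p a b K M N (2 * U) ≤ 4 * mainTerm p a b K M N U := by
  have hfactor : 0 ≤ K * M * U * (K + N) := by positivity
  unfold mainTerm
  linear_combination 2 * hfactor

lemma sq_mul_div_le_mainTerm (p : ℕ) (a : ℤ) {b : ℤ} (hb : b ≠ 0) {K M N U : ℝ} (hK : 0 ≤ K)
    (hM : 0 ≤ M) (hN : 0 ≤ N) (hU : 0 ≤ U) :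
    (K * M * N * U) ^ 2 / p ≤ mainTerm p a b K M N U := by
  have one_le_abs_b : (1 : ℝ) ≤ |(b : ℝ)| := by exact_mod_cast Int.one_le_abs hb
  calc (K * M * N * U) ^ 2 / p
      = K * M * U * (K + 0) * (0 + (0 + 1 * M * N) * U * N / p) := by ring
    _ ≤ mainTerm p a b K M N U := by
        unfold mainTerm
        gcongr <;> positivity

variable {p : ℕ}

lemma exists_intCast_eq_and_natAbs_le [NeZero p] (a : ℤ) :
    ∃ a' : ℤ, (a' : ZMod p) = a ∧ a'.natAbs ≤ p ∧ a'.natAbs ≤ a.natAbs := by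
  refine ⟨a.tmod p, ?_, ?_, ?_⟩
  · simpa using (congrArg (Int.cast (R := ZMod p)) (Int.mul_tdiv_add_tmod a p))
  · rw [Int.natAbs_tmod]
    exact (Nat.mod_lt _ (by simpa using Nat.pos_of_neZero p)).le
  · rw [Int.natAbs_tmod]
    exact Nat.mod_le _ _

lemma natCast_ne_zero_of_mem_Icc {k K : ℕ} (hk : k ∈ Icc 1 K) (hKp : K < p) :
    (k : ZMod p) ≠ 0 := by
  rw [Ne, ZMod.natCast_eq_zero_iff]
  exact Nat.not_dvd_of_pos_of_lt (mem_Icc.mp hk).1 ((mem_Icc.mp hk).2.trans_lt hKp)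

section LargeParameter

variable [Fact p.Prime] {a b r s : ZMod p} {K M N V W : ℕ}

lemma mul_card_congruenceSolutions_le_of_le (ha : a ≠ 0) (hb : b ≠ 0) (hr : K < p → r ≠ 0)
    (hlarge : p ≤ K ∨ p ≤ M ∨ p ≤ N ∨ p ≤ W) :
    p * #(congruenceSolutions a b r s K M N V W) ≤ 2 * (K * M * N * W) := by
  have mul_div_add_one_le {x y : ℕ} (hxy : x ≤ y) (hpy : p ≤ y) : p * (x / p + 1) ≤ 2 * y := by
    linarith [Nat.mul_div_le x p]
  have hWV : W - V ≤ W := Nat.sub_le W V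
  by_cases hK : p ≤ K
  · calc _ ≤ p * (M * N * W * (K / p + 1)) :=
          Nat.mul_le_mul_left p ((card_congruenceSolutions_le_of_free_fst ha).trans (by gcongr))
      _ = M * N * W * (p * (K / p + 1)) := by ring
      _ ≤ M * N * W * (2 * K) := Nat.mul_le_mul_left _ (mul_div_add_one_le le_rfl hK)
      _ = 2 * (K * M * N * W) := by ring
  obtain hM | hN | hW := hlarge.resolve_left hK
  · calc _ ≤ p * (K * N * W * (M / p + 1)) :=
          Nat.mul_le_mul_left p ((card_congruenceSolutions_le_of_free_snd hb).trans (by gcongr))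
      _ = K * N * W * (p * (M / p + 1)) := by ring
      _ ≤ K * N * W * (2 * M) := Nat.mul_le_mul_left _ (mul_div_add_one_le le_rfl hM)
      _ = 2 * (K * M * N * W) := by ring
  · calc _ ≤ p * (K * M * W * (N / p + 1)) :=
          Nat.mul_le_mul_left p ((card_congruenceSolutions_le_of_free_third
            (hr (not_le.mp hK))).trans (by gcongr))
      _ = K * M * W * (p * (N / p + 1)) := by ring
      _ ≤ K * M * W * (2 * N) := Nat.mul_le_mul_left _ (mul_div_add_one_le le_rfl hN)
      _ = 2 * (K * M * N * W) := by ring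
  · calc _ ≤ p * (K * M * N * ((W - V) / p + 1)) :=
          Nat.mul_le_mul_left p card_congruenceSolutions_le_of_free_fourth
      _ = K * M * N * (p * ((W - V) / p + 1)) := by ring
      _ ≤ K * M * N * (2 * W) := Nat.mul_le_mul_left _ (mul_div_add_one_le hWV hW)
      _ = 2 * (K * M * N * W) := by ring

lemma solutionCount_le_of_le (ha : a ≠ 0) (hb : b ≠ 0)
    (hlarge : p ≤ K ∨ p ≤ M ∨ p ≤ N ∨ p ≤ W) :
    (solutionCount a b K M N V W : ℝ) ≤ 2 * ((K * M * N * W) ^ 2 / p) := by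
  have hp : (0 : ℝ) < p := by exact_mod_cast (Fact.out : p.Prime).pos
  have hWV : ((W - V : ℕ) : ℝ) ≤ W := by exact_mod_cast Nat.sub_le W V
  calc (solutionCount a b K M N V W : ℝ)
      ≤ K * M * (W - V : ℕ) * ∑ _n' ∈ Icc 1 N, (2 * (K * M * N * W) / p : ℝ) := by
        refine solutionCount_le_of_forall (fun _ ↦ by positivity) ?_
        intro k hk m _ n' _ u' _ hn' hu'
        rw [le_div_iff₀' hp]
        exact_mod_cast mul_card_congruenceSolutions_le_of_le ha (mul_ne_zero hb hn') (fun hKp ↦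
          mul_ne_zero (mul_ne_zero (mul_ne_zero ha (natCast_ne_zero_of_mem_Icc hk hKp)) hn') hu')
          hlarge
    _ ≤ K * M * W * ∑ _n' ∈ Icc 1 N, (2 * (K * M * N * W) / p : ℝ) := by gcongr
    _ = 2 * ((K * M * N * W) ^ 2 / p) := by
        simp only [sum_const, Nat.card_Icc, Nat.add_sub_cancel, nsmul_eq_mul]
        ring

end LargeParameter

section SmallParameters

variable {K M N W : ℕ}

lemma three_mul_le_pow_eight {A B : ℕ} (hp : 2 ≤ p) (hA : A ≤ p) (hB : B ≤ p) (hK : K ≤ p)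
    (hM : M ≤ p) (hN : N ≤ p) (hW : W ≤ p) : 3 * ((A * K + B * M * N) * N * W) ≤ p ^ 8 :=
  calc 3 * ((A * K + B * M * N) * N * W) ≤ 3 * ((p * p + p * p * p) * p * p) := by gcongr
    _ = 3 * (1 + p) * p ^ 4 := by ring
    _ ≤ p ^ 4 * p ^ 4 := by
        gcongr
        nlinarith [Nat.pow_le_pow_left hp 3]
    _ = p ^ 8 := by ring

lemma one_add_log_le_mul_rpow {x y δ : ℝ} (hx : 0 ≤ x) (hxy : x ≤ y) (hy : 1 ≤ y) (hδ : 0 < δ) :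
    1 + Real.log x ≤ (1 + δ⁻¹) * y ^ δ :=
  calc 1 + Real.log x ≤ y ^ δ + x ^ δ / δ :=
        add_le_add (Real.one_le_rpow hy hδ.le) (Real.log_le_rpow_div hx hδ)
    _ ≤ y ^ δ + y ^ δ / δ := by gcongr
    _ = (1 + δ⁻¹) * y ^ δ := by ring

lemma card_congruenceSolutions_mul_le [Fact p.Prime] {a b : ℤ} (ha : (a : ZMod p) ≠ 0)
    (hb : b ≠ 0) {V X D : ℕ} (hX : (a.natAbs * K + b.natAbs * M * N) * N * W ≤ X)
    (hD : ∀ z ≠ 0, z ≤ 3 * X → #z.divisors ≤ D) (hKp : K < p) {k m n' u' : ℕ} (hk : k ∈ Icc 1 K)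
    (hm : m ∈ Icc 1 M) (hn' : n' ∈ Icc 1 N) (hu' : u' ∈ Ioc V W) (hn0 : (n' : ZMod p) ≠ 0)
    (hu0 : (u' : ZMod p) ≠ 0) :
    #(congruenceSolutions (a : ZMod p) (b * n') (a * k * n' * u') (b * m * n' * u') K M N V W) ≤
      D * D * (K / (n' / n'.gcd a.natAbs) + 1) * (2 * (2 * X / p) + 1) := by
  simp only [mem_Icc, mem_Ioc] at hm hn' hu'
  have box_le : ∀ n ≤ N, (|a| * K + |b * n| * M) * N * W ≤ (X : ℤ) := fun n hn ↦
    calc (|a| * K + |b * n| * M) * N * W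
        = (|a| * K + |b| * M * n) * N * W := by rw [abs_mul, Nat.abs_cast]; ring
      _ ≤ (|a| * K + |b| * M * N) * N * W := by gcongr
      _ ≤ X := by
        rw [Int.abs_eq_natAbs, Int.abs_eq_natAbs]
        exact_mod_cast hX
  have abs_le : ∀ n ≤ N, |a * k * n' * u' + b * m * n' * u' * n| ≤ (X : ℤ) := fun n hn ↦ by
    rw [show a * k * n' * u' + b * m * n' * u' * n = (a * k + b * n * m) * n' * u' by ring]
    exact (abs_add_mul_mul_le a (b * n) (mem_Icc.mp hk).2 hm.2 hn'.2 hu'.2).trans (box_le n hn)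
  have hr : ((a * k * n' * u' : ℤ) : ZMod p) ≠ 0 := by
    push_cast
    exact mul_ne_zero (mul_ne_zero (mul_ne_zero ha (natCast_ne_zero_of_mem_Icc hk hKp)) hn0) hu0
  have he : b * n' ≠ 0 := mul_ne_zero hb (by exact_mod_cast Nat.one_le_iff_ne_zero.mp hn'.1)
  simpa using card_congruenceSolutions_intCast_le (V := V) he (dvd_mul_left _ b) hr
    (box_le n' hn'.2) abs_le hD

lemma solutionCount_le_of_card_divisors_le [Fact p.Prime] {a b : ℤ} (ha : (a : ZMod p) ≠ 0)
    (hb : b ≠ 0) {V X D : ℕ} (hX : (a.natAbs * K + b.natAbs * M * N) * N * W ≤ X)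
    (hD : ∀ z ≠ 0, z ≤ 3 * X → #z.divisors ≤ D) (hKp : K < p) :
    (solutionCount (a : ZMod p) b K M N V W : ℝ) ≤
      K * M * W * ((K * (#a.natAbs.divisors * (1 + Real.log N)) + N) * D ^ 2 *
        (4 * (1 + X / p))) := by
  have ha0 : a.natAbs ≠ 0 := fun h0 ↦ ha (by simp [Int.natAbs_eq_zero.mp h0])
  have hWV : ((W - V : ℕ) : ℝ) ≤ W := by exact_mod_cast Nat.sub_le W V
  calc (solutionCount (a : ZMod p) b K M N V W : ℝ)
      ≤ K * M * (W - V : ℕ) * ∑ n' ∈ Icc 1 N,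
          (K * ((n' / n'.gcd a.natAbs : ℕ) : ℝ)⁻¹ + 1) * D ^ 2 * (4 * (1 + X / p)) := by
        refine solutionCount_le_of_forall (fun _ ↦ by positivity) ?_
        intro k hk m hm n' hn' u' hu' hn0 hu0
        refine (Nat.cast_le.mpr <|
          card_congruenceSolutions_mul_le ha hb hX hD hKp hk hm hn' hu' hn0 hu0).trans ?_
        push_cast
        have hquot : ((K / (n' / n'.gcd a.natAbs) : ℕ) : ℝ) ≤
            K * ((n' / n'.gcd a.natAbs : ℕ) : ℝ)⁻¹ := Nat.cast_div_le
        have hshift : ((2 * X / p : ℕ) : ℝ) ≤ 2 * X / p := by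
          simpa using Nat.cast_div_le (α := ℝ) (m := 2 * X) (n := p)
        calc _ ≤ D * D * (K * ((n' / n'.gcd a.natAbs : ℕ) : ℝ)⁻¹ + 1) * (2 * (2 * X / p) + 4) := by
              gcongr
              norm_num
          _ = _ := by ring
    _ = K * M * (W - V : ℕ) * ((K * ∑ n' ∈ Icc 1 N, ((n' / n'.gcd a.natAbs : ℕ) : ℝ)⁻¹ + N) *
          D ^ 2 * (4 * (1 + X / p))) := by
        rw [← sum_mul, ← sum_mul, sum_add_distrib, ← mul_sum]
        simp
    _ ≤ _ := by
        gcongr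
        exact sum_inv_div_gcd_le ha0 N

lemma card_divisors_le_mul_rpow_pow {C δ : ℝ} (hC : 0 ≤ C) (hδ : 0 ≤ δ)
    (hdiv : ∀ n : ℕ, n ≠ 0 → (#n.divisors : ℝ) ≤ C * (n : ℝ) ^ δ) {z j : ℕ} (hz : z ≠ 0)
    (hzp : z ≤ p ^ j) : (#z.divisors : ℝ) ≤ C * ((p : ℝ) ^ δ) ^ j :=
  calc (#z.divisors : ℝ) ≤ C * (z : ℝ) ^ δ := hdiv z hz
    _ ≤ C * ((p : ℝ) ^ j) ^ δ := by
      gcongr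
      exact_mod_cast hzp
    _ = C * ((p : ℝ) ^ δ) ^ j := by rw [Real.rpow_pow_comm p.cast_nonneg]

lemma solutionCount_le_of_card_divisors_le_rpow [Fact p.Prime] {C δ : ℝ} (hC : 1 ≤ C) (hδ : 0 < δ)
    (hdiv : ∀ n : ℕ, n ≠ 0 → (#n.divisors : ℝ) ≤ C * (n : ℝ) ^ δ) {a b : ℤ}
    (ha : (a : ZMod p) ≠ 0) (hb : b ≠ 0) (hap : a.natAbs ≤ p) (hbp : b.natAbs ≤ p) {V : ℕ}
    (hK : K < p) (hM : M ≤ p) (hN : N ≤ p) (hW : W ≤ p) :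
    (solutionCount (a : ZMod p) b K M N V W : ℝ) ≤
      4 * C ^ 3 * (1 + δ⁻¹) * (p : ℝ) ^ (18 * δ) * mainTerm p a b K M N W := by
  have hp : p.Prime := Fact.out
  have one_le_p : (1 : ℝ) ≤ p := by exact_mod_cast hp.one_le
  let q : ℝ := (p : ℝ) ^ δ
  have one_le_q : 1 ≤ q := Real.one_le_rpow one_le_p hδ.le
  let X : ℕ := (a.natAbs * K + b.natAbs * M * N) * N * W
  let D : ℕ := ⌊C * q ^ 8⌋₊
  have hD : ∀ z ≠ 0, z ≤ 3 * X → #z.divisors ≤ D := fun z hz hzX ↦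
    Nat.le_floor <| card_divisors_le_mul_rpow_pow (by positivity) hδ.le hdiv hz <|
      hzX.trans (three_mul_le_pow_eight hp.two_le hap hbp hK.le hM hN hW)
  have ha0 : a.natAbs ≠ 0 := fun h0 ↦ ha (by simp [Int.natAbs_eq_zero.mp h0])
  have gcd_sum_le : #a.natAbs.divisors * (1 + Real.log N) ≤ C * q ^ 1 * ((1 + δ⁻¹) * q) := by
    gcongr
    · exact card_divisors_le_mul_rpow_pow (by positivity) hδ.le hdiv ha0 (by simpa using hap)
    · exact one_add_log_le_mul_rpow N.cast_nonneg (by exact_mod_cast hN) one_le_p hδ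
  have one_le_gcd_bound : 1 ≤ C * q ^ 1 * ((1 + δ⁻¹) * q) := by
    have : 1 ≤ 1 + δ⁻¹ := le_add_of_nonneg_right (by positivity)
    have : 1 ≤ C * q ^ 1 := one_le_mul_of_one_le_of_one_le hC (by simpa using one_le_q)
    apply_rules [one_le_mul_of_one_le_of_one_le]
  calc (solutionCount (a : ZMod p) b K M N V W : ℝ)
      ≤ K * M * W * ((K * (#a.natAbs.divisors * (1 + Real.log N)) + N) * D ^ 2 *
          (4 * (1 + X / p))) := solutionCount_le_of_card_divisors_le ha hb le_rfl hD hK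
    _ ≤ K * M * W * ((K * (C * q ^ 1 * ((1 + δ⁻¹) * q)) + N * (C * q ^ 1 * ((1 + δ⁻¹) * q))) *
          (C * q ^ 8) ^ 2 * (4 * (1 + X / p))) := by
        gcongr
        · exact le_mul_of_one_le_right N.cast_nonneg one_le_gcd_bound
        · exact Nat.floor_le (by positivity)
    _ = 4 * C ^ 3 * (1 + δ⁻¹) * q ^ 18 * mainTerm p a b K M N W := by
        have hX : (X : ℝ) = (|(a : ℝ)| * K + |(b : ℝ)| * M * N) * W * N := by
          push_cast [X, Nat.cast_natAbs]
          ring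
        rw [mainTerm, hX]
        ring
    _ = _ := by rw [mul_comm 18 δ, Real.rpow_mul p.cast_nonneg, Real.rpow_ofNat]

end SmallParameters

lemma exists_solutionCount_le {ε : ℝ} (hε : 0 < ε) :
    ∃ C : ℝ, 0 < C ∧ ∀ p : ℕ, p.Prime → ∀ a b : ℤ, (a : ZMod p) ≠ 0 → (b : ZMod p) ≠ 0 →
      ∀ K M N V W : ℕ, (solutionCount (a : ZMod p) b K M N V W : ℝ) ≤
        C * (p : ℝ) ^ ε * mainTerm p a b K M N W := by
  have hδ : 0 < ε / 18 := by positivity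
  obtain ⟨C, hC, hdiv⟩ := exists_card_divisors_le_mul_rpow hδ
  have two_le_const : 2 ≤ 4 * C ^ 3 * (1 + (ε / 18)⁻¹) := by
    nlinarith [one_le_pow₀ hC (n := 3), inv_pos.mpr hδ]
  refine ⟨4 * C ^ 3 * (1 + (ε / 18)⁻¹), by positivity, fun p hp a b ha hb K M N V W ↦ ?_⟩
  have := Fact.mk hp
  by_cases hlarge : p ≤ K ∨ p ≤ M ∨ p ≤ N ∨ p ≤ W
  · have hb0 : b ≠ 0 := fun h0 ↦ hb (by simp [h0])
    have one_le_rpow : 1 ≤ (p : ℝ) ^ ε := Real.one_le_rpow (by exact_mod_cast hp.one_le) hε.le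
    calc (solutionCount (a : ZMod p) b K M N V W : ℝ)
        ≤ 2 * 1 * ((K * M * N * W) ^ 2 / p) := by simpa using solutionCount_le_of_le ha hb hlarge
      _ ≤ _ := by
        gcongr
        exact sq_mul_div_le_mainTerm p a hb0 (by simp) (by simp) (by simp) (by simp)
  · push Not at hlarge
    obtain ⟨hK, hM, hN, hW⟩ := hlarge
    obtain ⟨a', ha', hap, haa'⟩ := exists_intCast_eq_and_natAbs_le (p := p) a
    obtain ⟨b', hb', hbp, hbb'⟩ := exists_intCast_eq_and_natAbs_le (p := p) b
    have hb0 : b' ≠ 0 := fun h0 ↦ hb (by simp [← hb', h0])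
    rw [← ha'] at ha ⊢
    rw [← hb']
    refine (solutionCount_le_of_card_divisors_le_rpow hC hδ hdiv ha hb0 hap hbp hK hM.le hN.le
      hW.le).trans ?_
    rw [mul_div_cancel₀ ε (by norm_num)]
    gcongr
    exact mainTerm_le_mainTerm p haa' hbb' (by simp) (by simp) (by simp) (by simp) le_rfl le_rfl
      le_rfl le_rfl

end Bounds

open Classical in
/-- Lemma 4.1 (the counting bound for `ℐ₂` in the proof of Theorem 2.1). -/
theorem counting_I2 (ε : ℝ) (hε : 0 < ε) :
    ∃ C : ℝ, 0 < C ∧ ∀ (p : ℕ), p.Prime →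
      ∀ (a b : ℤ), ¬ ((p : ℤ) ∣ a * b) →
      ∀ (K M N U : ℝ), 1 ≤ K → 1 ≤ M → 1 ≤ N → 1 ≤ U →
      (∑ k ∈ Icc 1 ⌊K⌋₊, ∑ k' ∈ Icc 1 ⌊K⌋₊, ∑ m ∈ Icc 1 ⌊M⌋₊, ∑ m' ∈ Icc 1 ⌊M⌋₊,
        ∑ n ∈ Icc 1 ⌊N⌋₊, ∑ n' ∈ Icc 1 ⌊N⌋₊,
        ∑ u ∈ Ioc ⌊U⌋₊ ⌊2 * U⌋₊, ∑ u' ∈ Ioc ⌊U⌋₊ ⌊2 * U⌋₊,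
          if ((a * k + b * m * n) * n' * u' ≡ (a * k' + b * m' * n') * n * u [ZMOD (p : ℤ)]) ∧
              ¬ ((a * k + b * m * n) * n' * u' ≡ 0 [ZMOD (p : ℤ)]) then (1 : ℝ)
          else 0) ≤
        C * (p : ℝ) ^ ε * (K * M * U * (K + N) *
          (1 + ((|a| : ℝ) * K + (|b| : ℝ) * M * N) * U * N / (p : ℝ))) := by
  obtain ⟨C, hC, hcount⟩ := exists_solutionCount_le hε
  refine ⟨4 * C, by positivity, fun p hp a b hab K M N U hK hM hN hU ↦ ?_⟩
  have ha : (a : ZMod p) ≠ 0 := fun h0 ↦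
    hab (((ZMod.intCast_zmod_eq_zero_iff_dvd a p).mp h0).mul_right b)
  have hb : (b : ZMod p) ≠ 0 := fun h0 ↦
    hab (((ZMod.intCast_zmod_eq_zero_iff_dvd b p).mp h0).mul_left a)
  rw [sum_ite_modEq_eq_solutionCount]
  calc (solutionCount (a : ZMod p) b ⌊K⌋₊ ⌊M⌋₊ ⌊N⌋₊ ⌊U⌋₊ ⌊2 * U⌋₊ : ℝ)
      ≤ C * (p : ℝ) ^ ε * mainTerm p a b ⌊K⌋₊ ⌊M⌋₊ ⌊N⌋₊ ⌊2 * U⌋₊ :=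
        hcount p hp a b ha hb _ _ _ _ _
    _ ≤ C * (p : ℝ) ^ ε * mainTerm p a b K M N (2 * U) := by
        gcongr
        apply mainTerm_le_mainTerm p le_rfl le_rfl <;>
          first | positivity | exact Nat.floor_le (by positivity)
    _ ≤ C * (p : ℝ) ^ ε * (4 * mainTerm p a b K M N U) := by
        gcongr
        apply mainTerm_two_mul_le <;> positivity
    _ = _ := by
        rw [mainTerm]
        ring
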